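/- Let G be a strongly connected directed graph in which every directed cycle has at most 3 edges, and suppose u, x, v are three distinct vertices such that all six directed edges (u,x), (x,u), (u,v), (v,u), (x,v), (v,x) are present. Then either G has exactly the three vertices u, x, v, or at least one of u, x, v is a cut vertex of G. -/

import Mathlib

/-- A set `S` of directed edges strongly connects the vertex set `V`:
for every pair of vertices there is a directed path using only edges of `S`. -/
def StronglyConnects {V : Type*} (S : Set (V × V)) : Prop :=
  ∀ u v : V, Relation.ReflTransGen (fun a b => (a, b) ∈ S) u v

/-- The edges of the closed walk determined by the vertex list `c`
(consecutive pairs, wrapping around from the last vertex to the first). -/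
def cycleEdges {V : Type*} (c : List V) : List (V × V) := c.zip (c.rotate 1)

/-- `c` is a directed cycle of the graph with edge set `E`: a nonempty list of
distinct vertices all of whose consecutive (wrap-around) pairs are edges.
Its length (number of edges) is `c.length`. -/
def IsCycle {V : Type*} (E : Set (V × V)) (c : List V) : Prop :=
  c ≠ [] ∧ c.Nodup ∧ ∀ e ∈ cycleEdges c, e ∈ E

/-- An edge is redundant if deleting it leaves a strongly connected graph. -/
def Redundant {V : Type*} (E : Set (V × V)) (e : V × V) : Prop :=
  e ∈ E ∧ StronglyConnects (E \ {e})

/-- An edge is necessary if deleting it destroys strong connectivity. -/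
def Necessary {V : Type*} (E : Set (V × V)) (e : V × V) : Prop :=
  e ∈ E ∧ ¬ StronglyConnects (E \ {e})

/-- The set of necessary edges. -/
def necessarySet {V : Type*} (E : Set (V × V)) : Set (V × V) :=
  {e | Necessary E e}

/-- An edge `(u, v)` is unsatisfied if there is no directed path from `v`
back to `u` consisting only of necessary edges. -/
def Unsatisfied {V : Type*} (E : Set (V × V)) (e : V × V) : Prop :=
  e ∈ E ∧ ¬ Relation.ReflTransGen (fun a b => Necessary E (a, b)) e.2 e.1

/-- A redundant edge `r` provides a cycle for an unsatisfied edge `(u, v)` if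
there is a directed path from `v` to `u` consisting of necessary edges and `r`. -/
def ProvidesCycle {V : Type*} (E : Set (V × V)) (r : V × V) (e : V × V) : Prop :=
  Relation.ReflTransGen (fun a b => Necessary E (a, b) ∨ (a, b) = r) e.2 e.1

/-- `w` is a cut vertex: deleting `w` disconnects the underlying undirected graph,
i.e. some two vertices distinct from `w` are joined by no undirected path avoiding `w`. -/
def IsCutVertex {V : Type*} (E : Set (V × V)) (w : V) : Prop :=
  ∃ u v : V, u ≠ w ∧ v ≠ w ∧
    ¬ Relation.ReflTransGen
        (fun a b => a ≠ w ∧ b ≠ w ∧ ((a, b) ∈ E ∨ (b, a) ∈ E)) u v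

theorem aux_path {V : Type*} (r : V → V → Prop) {a y : V} (h : Relation.ReflTransGen r a y) :
    ∃ l : List V, (a :: l).Nodup ∧ (a :: l).IsChain r ∧ (a :: l).getLast? = some y := by
  induction h using Relation.ReflTransGen.head_induction_on with
  | refl => exact ⟨[], by simp⟩
  | @head a c hac _ ih =>
    obtain ⟨l, hn, hc, hl⟩ := ih
    by_cases ha : a ∈ c :: l
    · obtain ⟨p, q, hpq⟩ := List.append_of_mem ha
      rw [hpq] at hn hc hl
      refine ⟨q, (List.nodup_append.1 hn).2.1, (List.isChain_append.1 hc).2.1, ?_⟩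
      rw [← hl, List.getLast?_append]
      simp [List.getLast?_cons]
    · refine ⟨c :: l, List.nodup_cons.2 ⟨ha, hn⟩, List.isChain_cons_cons.2 ⟨hac, hc⟩, ?_⟩
      rw [← hl]; simp [List.getLast?_cons]

theorem aux_mem {V : Type*} (r : V → V → Prop) (T : V → Prop) (hr : ∀ a b, r a b → ¬ T b) :
    ∀ (l : List V) (a : V), (a :: l).IsChain r → ∀ z ∈ l, ¬ T z := by
  intro l
  induction l with
  | nil => simp
  | cons c l ih =>
    intro a h z hz
    rw [List.isChain_cons_cons] at h
    rcases List.mem_cons.1 hz with rfl | hz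
    · exact hr _ _ h.1
    · exact ih c h.2 z hz

theorem aux_zip {V : Type*} (E : Set (V × V)) (b y : V) (hyb : (y, b) ∈ E) :
    ∀ (l : List V) (a : V), (a :: l).IsChain (fun p q => (p, q) ∈ E) →
      (a :: l).getLast? = some y → ∀ e ∈ (a :: l).zip (l ++ [b]), e ∈ E := by
  intro l
  induction l with
  | nil =>
    intro a _ h e he
    simp at h he
    subst h; subst he; exact hyb
  | cons c l ih =>
    intro a h hl e he
    rw [List.isChain_cons_cons] at h
    simp only [List.cons_append, List.zip_cons_cons, List.mem_cons] at he
    rcases he with rfl | he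
    · exact h.1
    · exact ih c h.2 (by simpa [List.getLast?_cons] using hl) e he

theorem aux_key {V : Type*} (E : Set (V × V)) (T : V → Prop)
    (hcyc : ∀ c : List V, IsCycle E c → c.length ≤ 3)
    (hT : ∀ a b, T a → T b → a ≠ b → ∃ c, T c ∧ c ≠ a ∧ c ≠ b ∧ (b, c) ∈ E ∧ (c, a) ∈ E)
    {a b y : V} (ha : T a) (hb : T b) (hy : ¬ T y)
    (h : Relation.ReflTransGen (fun p q => (p, q) ∈ E ∧ ¬ T q) a y) (hyb : (y, b) ∈ E) :
    a = b := by
  by_contra hab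
  obtain ⟨c, hc, hca, hcb, hbc, hca'⟩ := hT a b ha hb hab
  obtain ⟨l, hn, hch, hl⟩ := aux_path _ h
  have hm := aux_mem _ T (fun _ _ h => h.2) l a hch
  have hch' : (a :: l).IsChain (fun p q => (p, q) ∈ E) := hch.imp (fun _ _ h => h.1)
  have hbl : b ∉ l := fun h => hm b h hb
  have hcl : c ∉ l := fun h => hm c h hc
  have := hcyc (b :: c :: a :: l) ⟨by simp, by
    simp only [List.nodup_cons, List.mem_cons, not_or] at hn ⊢
    exact ⟨⟨Ne.symm hcb, Ne.symm hab, hbl⟩, ⟨hca, hcl⟩, hn⟩, by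
    intro e he
    have : (b :: c :: a :: l).rotate 1 = (c :: a :: l) ++ [b] := by simp
    rw [cycleEdges, this] at he
    refine aux_zip E b y hyb (c :: a :: l) b ?_ ?_ e he
    · rw [List.isChain_cons_cons, List.isChain_cons_cons]; exact ⟨hbc, hca', hch'⟩
    · simpa [List.getLast?_cons] using hl⟩
  cases l with
  | nil => simp at hl; subst hl; exact hy ha
  | cons d l => simp at this; omega

theorem aux_key2 {V : Type*} (E : Set (V × V)) (T : V → Prop)
    (hcyc : ∀ c : List V, IsCycle E c → c.length ≤ 3)
    (hT : ∀ a b, T a → T b → a ≠ b → ∃ c, T c ∧ c ≠ a ∧ c ≠ b ∧ (b, c) ∈ E ∧ (c, a) ∈ E)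
    {a b w : V} (ha : T a) (hb : T b) (hw : ¬ T w)
    (h : Relation.ReflTransGen (fun p q => (p, q) ∈ E ∧ ¬ T q) a w)
    (h' : Relation.ReflTransGen (fun p q => (p, q) ∈ E ∧ ¬ T p) w b) :
    a = b := by
  induction h' using Relation.ReflTransGen.head_induction_on with
  | refl => exact absurd hb hw
  | @head w z hwz hzb ih =>
    by_cases hz : T z
    · rcases Relation.ReflTransGen.cases_head hzb with rfl | ⟨_, h2, _⟩
      · exact aux_key E T hcyc hT ha hb hw h hwz.1
      · exact absurd hz h2.2
    · exact ih hz (h.tail ⟨hwz.1, hz⟩)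

theorem aux_main {V : Type*} (E : Set (V × V)) (T : V → Prop)
    (hconn : StronglyConnects E)
    (hcyc : ∀ c : List V, IsCycle E c → c.length ≤ 3)
    (hT : ∀ a b, T a → T b → a ≠ b → ∃ c, T c ∧ c ≠ a ∧ c ≠ b ∧ (b, c) ∈ E ∧ (c, a) ∈ E)
    (hT2 : ∀ a, T a → ∃ b, T b ∧ b ≠ a)
    (t w : V) (ht : T t) (hw : ¬ T w) : ∃ a, T a ∧ IsCutVertex E a := by
  have exP : ∀ z, ∃ a, T a ∧ Relation.ReflTransGen (fun p q => (p, q) ∈ E ∧ ¬ T q) a z := by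
    intro z
    induction hconn t z with
    | refl => exact ⟨t, ht, .refl⟩
    | @tail y z _ hyz ih =>
      by_cases hz : T z
      · exact ⟨z, hz, .refl⟩
      · obtain ⟨a, ha, h⟩ := ih
        exact ⟨a, ha, h.tail ⟨hyz, hz⟩⟩
  have exQ : ∀ z, ∃ a, T a ∧ Relation.ReflTransGen (fun p q => (p, q) ∈ E ∧ ¬ T p) z a := by
    intro z
    induction hconn z t using Relation.ReflTransGen.head_induction_on with
    | refl => exact ⟨t, ht, .refl⟩
    | @head z y hzy _ ih =>
      by_cases hz : T z
      · exact ⟨z, hz, .refl⟩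
      · obtain ⟨a, ha, h⟩ := ih
        exact ⟨a, ha, h.head ⟨hzy, hz⟩⟩
  obtain ⟨a, ha, haw⟩ := exP w
  obtain ⟨t', ht', hne⟩ := hT2 a ha
  refine ⟨a, ha, w, t', fun h => hw (h ▸ ha), hne, fun hpath => ?_⟩
  have : ¬ T t' ∧ Relation.ReflTransGen (fun p q => (p, q) ∈ E ∧ ¬ T q) a t' := by
    clear ht' hne
    induction hpath with
    | refl => exact ⟨hw, haw⟩
    | @tail y z _ hyz ih =>
      obtain ⟨hy, hay⟩ := ih
      obtain ⟨-, hza, hE | hE⟩ := hyz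
      · by_cases hz : T z
        · exact absurd (aux_key E T hcyc hT ha hz hy hay hE).symm hza
        · exact ⟨hz, hay.tail ⟨hE, hz⟩⟩
      · obtain ⟨b, hb, hyb⟩ := exQ y
        have hab := aux_key2 E T hcyc hT ha hb hy hay hyb
        subst hab
        by_cases hz : T z
        · exact absurd (aux_key2 E T hcyc hT hz ha hy (.single ⟨hE, hy⟩) hyb) hza
        · obtain ⟨d, hd, hdz⟩ := exP z
          have := aux_key2 E T hcyc hT hd ha hz hdz (hyb.head ⟨hE, hz⟩)
          subst this
          exact ⟨hz, hdz⟩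
  exact this.1 ht'

/-- In a strongly connected digraph with no directed cycle of more
than 3 edges, if all six edges are present among three distinct vertices
`u`, `x`, `v`, then either these are the only vertices or one of them is a
cut vertex. -/
theorem triangle_forces_cut_vertex {V : Type*} [Fintype V] (E : Set (V × V))
    (hconn : StronglyConnects E)
    (hcyc : ∀ c : List V, IsCycle E c → c.length ≤ 3)
    (u x v : V) (hux : u ≠ x) (huv : u ≠ v) (hxv : x ≠ v)
    (h1 : (u, x) ∈ E) (h2 : (x, u) ∈ E) (h3 : (u, v) ∈ E)
    (h4 : (v, u) ∈ E) (h5 : (x, v) ∈ E) (h6 : (v, x) ∈ E) :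
    (∀ w : V, w = u ∨ w = x ∨ w = v) ∨
      (IsCutVertex E u ∨ IsCutVertex E x ∨ IsCutVertex E v) := by
  by_contra hcon
  rw [not_or] at hcon
  obtain ⟨hw, hcut⟩ := hcon
  obtain ⟨w, hw⟩ := not_forall.1 hw
  apply hcut
  obtain ⟨a, ha, hcv⟩ := aux_main E (fun w => w = u ∨ w = x ∨ w = v) hconn hcyc
    (by
      rintro a b (rfl | rfl | rfl) (rfl | rfl | rfl) hab
      · exact absurd rfl hab
      · exact ⟨v, by simp, huv.symm, hxv.symm, h5, h4⟩
      · exact ⟨x, by simp, hux.symm, hxv, h6, h2⟩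
      · exact ⟨v, by simp, hxv.symm, huv.symm, h3, h6⟩
      · exact absurd rfl hab
      · exact ⟨u, by simp, hux, huv, h4, h1⟩
      · exact ⟨x, by simp, hxv, hux.symm, h1, h5⟩
      · exact ⟨u, by simp, huv, hux, h2, h3⟩
      · exact absurd rfl hab)
    (by
      rintro a (rfl | rfl | rfl)
      · exact ⟨x, by simp, hux.symm⟩
      · exact ⟨u, by simp, hux⟩
      · exact ⟨u, by simp, huv⟩)
    u w (Or.inl rfl) hw
  rcases ha with rfl | rfl | rfl
  · exact Or.inl hcv
  · exact Or.inr (Or.inl hcv)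
  · exact Or.inr (Or.inr hcv)
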